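/- arXiv:1811.03188 — 2 statements merged into one kernel-verified Lean document; each statement's English description precedes it below -/
import Mathlib

section
/- Let A and B be real symmetric d×d matrices (d ≥ 3) with eigenvalues listed in nonincreasing order, and let P_A and P_B denote the orthogonal projections onto the span of eigenvectors corresponding to the top 2 eigenvalues of A and of B, respectively. If λ₂(A) − |λ₃(A)| − ‖A − B‖₂ > 0, then ‖(I − P_A) P_B‖₂ ≤ ‖A − B‖₂ / (λ₂(A) − |λ₃(A)| − ‖A − B‖₂). -/
open Matrix
open scoped Matrix.Norms.L2Operator


theorem dk_norm_le_of_coord {d : ℕ} {V : Type*} [NormedAddCommGroup V] [InnerProductSpace ℝ V]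
    (b : OrthonormalBasis (Fin d) ℝ V) (x y : V) (c : ℝ) (hc : 0 ≤ c)
    (h : ∀ i, |inner ℝ (b i) x| ≤ c * |inner ℝ (b i) y|) : ‖x‖ ≤ c * ‖y‖ := by
  have h2 : ‖x‖ ^ 2 ≤ (c * ‖y‖) ^ 2 := by
    rw [mul_pow, ← b.sum_sq_norm_inner_right x, ← b.sum_sq_norm_inner_right y, Finset.mul_sum]
    refine Finset.sum_le_sum fun i _ => ?_
    rw [← mul_pow, Real.norm_eq_abs, Real.norm_eq_abs]
    exact pow_le_pow_left₀ (abs_nonneg _) (h i) 2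
  exact le_of_sq_le_sq h2 (by positivity)

theorem dk_coord {d : ℕ} {V : Type*} [NormedAddCommGroup V] [InnerProductSpace ℝ V]
    (b : OrthonormalBasis (Fin d) ℝ V) (T : V →ₗ[ℝ] V) (μ : Fin d → ℝ)
    (h : ∀ i, T (b i) = μ i • b i) (x : V) (i : Fin d) :
    inner ℝ (b i) (T x) = μ i * inner ℝ (b i) x := by
  conv_lhs => rw [← b.sum_repr x]
  simp only [map_sum, map_smul, h, inner_sum, inner_smul_right, b.repr_apply_apply]
  rw [Finset.sum_eq_single i]
  · simp; ring
  · intro j _ hj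
    rw [b.inner_eq_zero hj.symm]; simp
  · simp

theorem dk_proj {d : ℕ} {V : Type*} [NormedAddCommGroup V] [InnerProductSpace ℝ V]
    [FiniteDimensional ℝ V]
    (b : OrthonormalBasis (Fin d) ℝ V) (i0 i1 : Fin d) (h01 : i0 ≠ i1) (P : V →L[ℝ] V)
    (hP : P = (Submodule.span ℝ {b i0, b i1}).subtypeL.comp
      (Submodule.orthogonalProjectionOnto (Submodule.span ℝ {b i0, b i1}))) (x : V) (i : Fin d) :
    inner ℝ (b i) (P x) = if i = i0 ∨ i = i1 then inner ℝ (b i) x else 0 := by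
  have hmem : P x ∈ Submodule.span ℝ {b i0, b i1} := by rw [hP]; simp
  have hort : x - P x ∈ (Submodule.span ℝ {b i0, b i1})ᗮ := by
    rw [hP]; exact Submodule.sub_starProjection_mem_orthogonal x
  split_ifs with h
  · have hb : b i ∈ Submodule.span ℝ {b i0, b i1} := by
      apply Submodule.subset_span
      rcases h with rfl | rfl <;> simp
    have := (Submodule.mem_orthogonal _ _).1 hort _ hb
    rw [inner_sub_right] at this
    linarith
  · push Not at h
    obtain ⟨p, q, hpq⟩ := Submodule.mem_span_pair.1 hmem
    rw [← hpq, inner_add_right, inner_smul_right, inner_smul_right, b.inner_eq_zero h.1,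
      b.inner_eq_zero h.2]
    simp

theorem dk_ext {d : ℕ} {V : Type*} [NormedAddCommGroup V] [InnerProductSpace ℝ V]
    (b : OrthonormalBasis (Fin d) ℝ V) (x y : V)
    (h : ∀ i, inner ℝ (b i) x = inner ℝ (b i) y) : x = y := by
  apply b.repr.injective
  ext i
  simpa [b.repr_apply_apply] using h i

theorem dk_quad {d : ℕ} {V : Type*} [NormedAddCommGroup V] [InnerProductSpace ℝ V]
    (b : OrthonormalBasis (Fin d) ℝ V) (T : V →ₗ[ℝ] V) (μ : Fin d → ℝ)
    (h : ∀ i, T (b i) = μ i • b i) (x : V) (c : ℝ) :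
    inner ℝ x (T x) - c * ‖x‖ ^ 2 = ∑ i, (μ i - c) * (inner ℝ (b i) x) ^ 2 := by
  rw [← b.sum_sq_norm_inner_right x, ← b.sum_inner_mul_inner, Finset.mul_sum,
    ← Finset.sum_sub_distrib]
  refine Finset.sum_congr rfl fun i _ => ?_
  rw [dk_coord b T μ h, real_inner_comm, Real.norm_eq_abs, sq_abs]
  ring

theorem dk_weyl {d : ℕ} {V : Type*} [NormedAddCommGroup V] [InnerProductSpace ℝ V]
    (a b : OrthonormalBasis (Fin d) ℝ V) (S T : V →ₗ[ℝ] V) (μ ν : Fin d → ℝ)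
    (hS : ∀ i, S (a i) = μ i • a i) (hT : ∀ i, T (b i) = ν i • b i)
    (i0 i1 : Fin d) (h01 : i0 ≠ i1) (hμ : μ i1 ≤ μ i0) (hν : ∀ i, i ≠ i0 → ν i ≤ ν i1)
    (e : ℝ) (he : ∀ x, ‖S x - T x‖ ≤ e * ‖x‖) : μ i1 - e ≤ ν i1 := by
  obtain ⟨p, q, hpq, hz⟩ : ∃ p q : ℝ, (p ≠ 0 ∨ q ≠ 0) ∧
      p * inner ℝ (b i0) (a i0) + q * inner ℝ (b i0) (a i1) = 0 := by
    by_cases h : inner ℝ (b i0) (a i0) = (0 : ℝ)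
    · exact ⟨1, 0, by simp, by simp [h]⟩
    · exact ⟨inner ℝ (b i0) (a i1), -inner ℝ (b i0) (a i0), by right; simpa using h, by ring⟩
  set x := p • a i0 + q • a i1 with hx
  have hai0 : inner ℝ (a i0) x = p := by
    simp [hx, inner_add_right, inner_smul_right, a.inner_eq_zero h01]
  have hai1 : inner ℝ (a i1) x = q := by
    simp [hx, inner_add_right, inner_smul_right, a.inner_eq_zero h01.symm]
  have hx0 : x ≠ 0 := by
    intro h
    rw [h] at hai0 hai1
    simp at hai0 hai1
    rcases hpq with h | h
    · exact h hai0.symm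
    · exact h hai1.symm
  have hn : 0 < ‖x‖ ^ 2 := by positivity
  have h1 := dk_quad a S μ hS x (μ i1)
  have h1' : 0 ≤ ∑ i, (μ i - μ i1) * (inner ℝ (a i) x) ^ 2 := by
    refine Finset.sum_nonneg fun i _ => ?_
    by_cases hi0 : i = i0
    · subst hi0; exact mul_nonneg (by linarith) (sq_nonneg _)
    by_cases hi1 : i = i1
    · subst hi1; simp
    have : inner ℝ (a i) x = (0 : ℝ) := by
      simp [hx, inner_add_right, inner_smul_right, a.inner_eq_zero hi0, a.inner_eq_zero hi1]
    simp [this]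
  have h2 := dk_quad b T ν hT x (ν i1)
  have h2' : ∑ i, (ν i - ν i1) * (inner ℝ (b i) x) ^ 2 ≤ 0 := by
    refine Finset.sum_nonpos fun i _ => ?_
    by_cases hi0 : i = i0
    · have : inner ℝ (b i) x = (0 : ℝ) := by
        rw [hi0, hx, inner_add_right, inner_smul_right, inner_smul_right, hz]
      simp [this]
    · exact mul_nonpos_of_nonpos_of_nonneg (by linarith [hν i hi0]) (sq_nonneg _)
  have h3 : inner ℝ x (S x - T x) ≤ e * ‖x‖ ^ 2 := by
    refine (real_inner_le_norm _ _).trans ?_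
    nlinarith [he x, norm_nonneg x]
  rw [inner_sub_right] at h3
  have : (μ i1 - e - ν i1) * ‖x‖ ^ 2 ≤ 0 := by nlinarith
  by_contra hcon
  push Not at hcon
  nlinarith [mul_pos (sub_pos.2 hcon) hn]

theorem dk_main {d : ℕ} {V : Type*} [NormedAddCommGroup V] [InnerProductSpace ℝ V]
    [FiniteDimensional ℝ V]
    (a b : OrthonormalBasis (Fin d) ℝ V) (S T : V →ₗ[ℝ] V) (μ ν : Fin d → ℝ)
    (hS : ∀ i, S (a i) = μ i • a i) (hT : ∀ i, T (b i) = ν i • b i)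
    (i0 i1 : Fin d) (h01 : i0 ≠ i1) (hν : ν i1 ≤ ν i0)
    (β : ℝ) (hβ : ∀ i, i ≠ i0 → i ≠ i1 → μ i ≤ β)
    (e : ℝ) (he0 : 0 ≤ e) (he : ∀ x, ‖S x - T x‖ ≤ e * ‖x‖) (hgap : β < ν i1)
    (P R : V →L[ℝ] V)
    (hP : P = (Submodule.span ℝ {a i0, a i1}).subtypeL.comp
      (Submodule.orthogonalProjectionOnto (Submodule.span ℝ {a i0, a i1})))
    (hR : R = (Submodule.span ℝ {b i0, b i1}).subtypeL.comp
      (Submodule.orthogonalProjectionOnto (Submodule.span ℝ {b i0, b i1}))) :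
    (ν i1 - β) * ‖(ContinuousLinearMap.id ℝ V - P).comp R‖ ≤ e := by
  have cP := dk_proj a i0 i1 h01 P hP
  have cR := dk_proj b i0 i1 h01 R hR
  set Q := ContinuousLinearMap.id ℝ V - P with hQ
  have cQ : ∀ x i, inner ℝ (a i) (Q x) = if i = i0 ∨ i = i1 then 0 else inner ℝ (a i) x := by
    intro x i
    rw [hQ, ContinuousLinearMap.sub_apply, inner_sub_right, cP]
    split_ifs <;> simp
  have nQ : ∀ x, ‖Q x‖ ≤ ‖x‖ := by
    intro x
    have := dk_norm_le_of_coord a (Q x) x 1 zero_le_one (fun i => by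
      rw [cQ]; split_ifs <;> simp)
    simpa using this
  have nR : ∀ x, ‖R x‖ ≤ ‖x‖ := by
    intro x
    have := dk_norm_le_of_coord b (R x) x 1 zero_le_one (fun i => by
      rw [cR]; split_ifs <;> simp)
    simpa using this
  set X := Q.comp R with hX
  obtain ⟨s, hs, hsβ⟩ : ∃ s : ℝ, (∀ i, 0 ≤ μ i + s) ∧ 0 < β + s := by
    refine ⟨∑ i, |μ i| + |β| + 1, fun i => ?_, ?_⟩
    · have := Finset.single_le_sum (f := fun i => |μ i|) (fun j _ => abs_nonneg _)
        (Finset.mem_univ i)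
      linarith [neg_abs_le (μ i), abs_nonneg β]
    · have : 0 ≤ ∑ i, |μ i| := Finset.sum_nonneg fun i _ => abs_nonneg _
      linarith [neg_abs_le β]
  have hα : 0 < ν i1 + s := by linarith
  have hα0 : 0 < ν i0 + s := by linarith
  have key : ‖X‖ ≤ ((β + s) * ‖X‖ + e) / (ν i1 + s) := by
    refine ContinuousLinearMap.opNorm_le_bound _ (by positivity) fun x => ?_
    rw [div_mul_eq_mul_div, le_div_iff₀ hα]
    set z := R x with hz
    obtain ⟨y, hy⟩ : ∃ y : V, y = ((ν i0 + s)⁻¹ * inner ℝ (b i0) z) • b i0 +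
      ((ν i1 + s)⁻¹ * inner ℝ (b i1) z) • b i1 := ⟨_, rfl⟩
    have y0 : inner ℝ (b i0) y = (ν i0 + s)⁻¹ * inner ℝ (b i0) z := by
      simp [hy, inner_add_right, inner_smul_right, b.inner_eq_zero h01]
    have y1 : inner ℝ (b i1) y = (ν i1 + s)⁻¹ * inner ℝ (b i1) z := by
      simp [hy, inner_add_right, inner_smul_right, b.inner_eq_zero h01.symm]
    have yi : ∀ i, ¬ (i = i0 ∨ i = i1) → inner ℝ (b i) y = 0 := by
      intro i hi
      push Not at hi
      simp [hy, inner_add_right, inner_smul_right, b.inner_eq_zero hi.1, b.inner_eq_zero hi.2]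
    have zi : ∀ i, ¬ (i = i0 ∨ i = i1) → inner ℝ (b i) z = 0 := by
      intro i hi
      rw [hz, cR, if_neg hi]
    have zT : ∀ i, inner ℝ (b i) z = (ν i + s) * inner ℝ (b i) y := by
      intro i
      by_cases hi : i = i0 ∨ i = i1
      · rcases hi with rfl | rfl
        · rw [y0]; field_simp
        · rw [y1]; field_simp
      · rw [yi i hi, zi i hi, mul_zero]
    have hzy : z = T y + s • y := by
      refine dk_ext b _ _ fun i => ?_
      rw [zT, inner_add_right, inner_smul_right, dk_coord b T ν hT]; ring
    have hRy : R y = y := by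
      refine dk_ext b _ _ fun i => ?_
      rw [cR]
      split_ifs with h
      · rfl
      · rw [yi i h]
    have hyn : (ν i1 + s) * ‖y‖ ≤ ‖z‖ := by
      have := dk_norm_le_of_coord b y z (ν i1 + s)⁻¹ (by positivity) (fun i => by
        by_cases hi : i = i0 ∨ i = i1
        · rw [zT, abs_mul, ← mul_assoc]
          have : ν i1 + s ≤ |ν i + s| := by
            refine le_trans ?_ (le_abs_self _)
            rcases hi with rfl | rfl <;> linarith
          refine le_mul_of_one_le_left (abs_nonneg _) ?_
          rw [inv_mul_eq_div, one_le_div hα]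
          exact this
        · rw [yi i hi, zi i hi]; simp)
      rw [inv_mul_eq_div, le_div_iff₀ hα] at this
      linarith
    have hQz : Q z = (S (Q y) + s • Q y) - Q (S y - T y) := by
      refine dk_ext a _ _ fun i => ?_
      rw [hzy, inner_sub_right, inner_add_right, inner_smul_right, dk_coord a S μ hS, cQ, cQ, cQ]
      split_ifs
      · simp
      · rw [inner_add_right, inner_smul_right, inner_sub_right, dk_coord a S μ hS]; ring
    have h1 : ‖S (Q y) + s • Q y‖ ≤ (β + s) * ‖Q y‖ := by
      refine dk_norm_le_of_coord a _ _ _ hsβ.le fun i => ?_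
      rw [inner_add_right, inner_smul_right, dk_coord a S μ hS, ← add_mul, abs_mul,
        abs_of_nonneg (hs i)]
      by_cases hi : i = i0 ∨ i = i1
      · rw [cQ, if_pos hi]; simp
      · push Not at hi
        exact mul_le_mul_of_nonneg_right (by linarith [hβ i hi.1 hi.2]) (abs_nonneg _)
    have h2 : ‖Q (S y - T y)‖ ≤ e * ‖y‖ := (nQ _).trans (he y)
    have h3 : ‖Q y‖ ≤ ‖X‖ * ‖y‖ := by
      have := X.le_opNorm y
      rwa [hX, ContinuousLinearMap.comp_apply, hRy] at this
    have h4 : ‖Q z‖ ≤ ((β + s) * ‖X‖ + e) * ‖y‖ := by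
      rw [hQz]
      refine (norm_sub_le _ _).trans ?_
      nlinarith [mul_le_mul_of_nonneg_left h3 hsβ.le]
    have h5 : X x = Q z := rfl
    rw [h5]
    have hc : 0 ≤ (β + s) * ‖X‖ + e := by positivity
    calc ‖Q z‖ * (ν i1 + s) ≤ (((β + s) * ‖X‖ + e) * ‖y‖) * (ν i1 + s) :=
          mul_le_mul_of_nonneg_right h4 hα.le
      _ = ((β + s) * ‖X‖ + e) * ((ν i1 + s) * ‖y‖) := by ring
      _ ≤ ((β + s) * ‖X‖ + e) * ‖x‖ :=
          mul_le_mul_of_nonneg_left (hyn.trans (nR x)) hc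
  rw [le_div_iff₀ hα] at key
  linarith

/-- Combined Davis–Kahan / Weyl perturbation bound for the top-2 eigenspaces of two real
symmetric matrices: if `λ₂(A) − |λ₃(A)| − ‖A − B‖₂ > 0`, then
`‖(I − P_A) P_B‖₂ ≤ ‖A − B‖₂ / (λ₂(A) − |λ₃(A)| − ‖A − B‖₂)`, where `P_A`, `P_B` are the
orthogonal projections onto the spans of the eigenvectors of the top 2 eigenvalues. -/
theorem davis_kahan_top_two
    (d : ℕ) (hd : 3 ≤ d)
    (A B : Matrix (Fin d) (Fin d) ℝ) (hA : A.IsHermitian) (hB : B.IsHermitian)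
    (μA μB : Fin d → ℝ) (hμA : Antitone μA) (hμB : Antitone μB)
    (vA vB : Fin d → EuclideanSpace ℝ (Fin d))
    (hvA : Orthonormal ℝ vA) (hvB : Orthonormal ℝ vB)
    (heA : ∀ i, Matrix.toEuclideanLin A (vA i) = μA i • vA i)
    (heB : ∀ i, Matrix.toEuclideanLin B (vB i) = μB i • vB i)
    (PA PB : EuclideanSpace ℝ (Fin d) →L[ℝ] EuclideanSpace ℝ (Fin d))
    (hPA : PA = (Submodule.span ℝ {vA ⟨0, by omega⟩, vA ⟨1, by omega⟩}).subtypeL.comp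
      (Submodule.orthogonalProjectionOnto (Submodule.span ℝ {vA ⟨0, by omega⟩, vA ⟨1, by omega⟩})))
    (hPB : PB = (Submodule.span ℝ {vB ⟨0, by omega⟩, vB ⟨1, by omega⟩}).subtypeL.comp
      (Submodule.orthogonalProjectionOnto (Submodule.span ℝ {vB ⟨0, by omega⟩, vB ⟨1, by omega⟩})))
    (hgap : 0 < μA ⟨1, by omega⟩ - |μA ⟨2, by omega⟩| - ‖A - B‖) :
    ‖(ContinuousLinearMap.id ℝ (EuclideanSpace ℝ (Fin d)) - PA).comp PB‖ ≤
      ‖A - B‖ / (μA ⟨1, by omega⟩ - |μA ⟨2, by omega⟩| - ‖A - B‖) := by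
  have hcard : Fintype.card (Fin d) = Module.finrank ℝ (EuclideanSpace ℝ (Fin d)) := by simp
  have hspA := hvA.linearIndependent.span_eq_top_of_card_eq_finrank' hcard
  have hspB := hvB.linearIndependent.span_eq_top_of_card_eq_finrank' hcard
  obtain ⟨a, ha⟩ : ∃ a : OrthonormalBasis (Fin d) ℝ (EuclideanSpace ℝ (Fin d)), ⇑a = vA :=
    ⟨OrthonormalBasis.mk hvA hspA.ge, by simp⟩
  obtain ⟨b, hb⟩ : ∃ b : OrthonormalBasis (Fin d) ℝ (EuclideanSpace ℝ (Fin d)), ⇑b = vB :=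
    ⟨OrthonormalBasis.mk hvB hspB.ge, by simp⟩
  subst ha hb
  have he : ∀ x, ‖Matrix.toEuclideanLin A x - Matrix.toEuclideanLin B x‖ ≤ ‖A - B‖ * ‖x‖ := by
    intro x
    rw [← LinearMap.sub_apply, ← map_sub]
    exact Matrix.l2_opNorm_mulVec (A - B) x
  have h01 : (⟨0, by omega⟩ : Fin d) ≠ ⟨1, by omega⟩ := by simp
  have hW := dk_weyl a b _ _ μA μB heA heB ⟨0, by omega⟩ ⟨1, by omega⟩ h01
    (hμA (by simp [Fin.le_def])) (fun i hi => hμB (by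
      simp only [Fin.le_def, ne_eq, Fin.ext_iff] at hi ⊢; omega)) _ he
  have habs := le_abs_self (μA ⟨2, by omega⟩)
  have hM := dk_main a b _ _ μA μB heA heB ⟨0, by omega⟩ ⟨1, by omega⟩ h01
    (hμB (by simp [Fin.le_def])) (μA ⟨2, by omega⟩) (fun i hi hi' => hμA (by
      simp only [Fin.le_def, ne_eq, Fin.ext_iff] at hi hi' ⊢; omega)) _ (norm_nonneg _) he
    (by linarith) PA PB hPA hPB
  rw [le_div_iff₀ hgap, mul_comm]
  refine le_trans (mul_le_mul_of_nonneg_right ?_ (norm_nonneg _)) hM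
  linarith
end

section
/- Let m, k ≥ 2, let a, b be indices with a + 1 < m and b + 1 < k, and set i = (a, b), j = (a, b+1), and κ = (a+1, b+1) in the m×k grid graph on Fin m × Fin k. Let G' be the graph obtained from the grid graph by deleting the single edge {i, j}. Then in G' the graph distance from i to κ equals 2, while the graph distance from i to j equals 3. In particular, the vertex i is strictly closer in G' to its diagonal neighbor κ than to its true grid neighbor j. -/
/-- The m×k grid graph on `Fin m × Fin k`: two vertices are adjacent iff they agree in one
coordinate and differ by exactly 1 in the other. -/
def gridGraph (m k : ℕ) : SimpleGraph (Fin m × Fin k) where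
  Adj u v := (u.1 = v.1 ∧ Nat.dist u.2.1 v.2.1 = 1) ∨ (u.2 = v.2 ∧ Nat.dist u.1.1 v.1.1 = 1)
  symm := by
    constructor
    intro u v h
    rcases h with ⟨h1, h2⟩ | ⟨h1, h2⟩
    · exact Or.inl ⟨h1.symm, by rwa [Nat.dist_comm]⟩
    · exact Or.inr ⟨h1.symm, by rwa [Nat.dist_comm]⟩
  loopless := by
    constructor
    intro u h
    rcases h with ⟨_, h2⟩ | ⟨_, h2⟩ <;> simp [Nat.dist_self] at h2

/-- In the m×k grid graph with the single edge between `i = (a,b)` and `j = (a,b+1)` deleted,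
the graph distance from `i` to the diagonal neighbor `κ = (a+1,b+1)` is 2 while the distance
from `i` to its true grid neighbor `j` is 3; in particular `i` is strictly closer to `κ`
than to `j`. -/
theorem grid_deleteEdge_dist
    (m k a b : ℕ) (hm : 2 ≤ m) (hk : 2 ≤ k) (ha : a + 1 < m) (hb : b + 1 < k)
    (i j κ : Fin m × Fin k)
    (hi : i = (⟨a, by omega⟩, ⟨b, by omega⟩))
    (hj : j = (⟨a, by omega⟩, ⟨b + 1, by omega⟩))
    (hκ : κ = (⟨a + 1, by omega⟩, ⟨b + 1, by omega⟩))
    (G' : SimpleGraph (Fin m × Fin k))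
    (hG' : G' = (gridGraph m k).deleteEdges {s(i, j)}) :
    G'.dist i κ = 2 ∧ G'.dist i j = 3 ∧ G'.dist i κ < G'.dist i j := by
  subst hi hj hκ
  have adj : ∀ u v : Fin m × Fin k, G'.Adj u v →
      (u.1.1 = v.1.1 ∧ (u.2.1 + 1 = v.2.1 ∨ v.2.1 + 1 = u.2.1)) ∨
      (u.2.1 = v.2.1 ∧ (u.1.1 + 1 = v.1.1 ∨ v.1.1 + 1 = u.1.1)) := by
    intro u v h
    rw [hG', SimpleGraph.deleteEdges_adj] at h
    rcases h.1 with ⟨h1, h2⟩ | ⟨h1, h2⟩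
    · have := congrArg Fin.val h1
      unfold Nat.dist at h2
      omega
    · have := congrArg Fin.val h1
      unfold Nat.dist at h2
      omega
  have e1 : G'.Adj (⟨a, by omega⟩, ⟨b, by omega⟩) (⟨a + 1, by omega⟩, ⟨b, by omega⟩) := by
    rw [hG', SimpleGraph.deleteEdges_adj]
    refine ⟨Or.inr ⟨rfl, by simp [Nat.dist]⟩, ?_⟩
    simp
  have e2 : G'.Adj (⟨a + 1, by omega⟩, ⟨b, by omega⟩) (⟨a + 1, by omega⟩, ⟨b + 1, by omega⟩) := by
    rw [hG', SimpleGraph.deleteEdges_adj]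
    refine ⟨Or.inl ⟨rfl, by simp [Nat.dist]⟩, ?_⟩
    simp
  have e3 : G'.Adj (⟨a + 1, by omega⟩, ⟨b + 1, by omega⟩) (⟨a, by omega⟩, ⟨b + 1, by omega⟩) := by
    rw [hG', SimpleGraph.deleteEdges_adj]
    refine ⟨Or.inr ⟨rfl, by simp [Nat.dist]⟩, ?_⟩
    simp
  have ne : ¬ G'.Adj (⟨a, by omega⟩, ⟨b, by omega⟩) (⟨a, by omega⟩, ⟨b + 1, by omega⟩) := by
    rw [hG', SimpleGraph.deleteEdges_adj]
    simp
  clear hG'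
  have d2 : G'.dist (⟨a, by omega⟩, ⟨b, by omega⟩) (⟨a + 1, by omega⟩, ⟨b + 1, by omega⟩) = 2 := by
    apply le_antisymm
    · exact SimpleGraph.dist_le (.cons e1 (.cons e2 .nil))
    · obtain ⟨w, hw⟩ := SimpleGraph.Reachable.exists_walk_length_eq_dist
        (⟨.cons e1 (.cons e2 .nil)⟩ : G'.Reachable _ _)
      rw [← hw]
      rcases w with _ | ⟨h, _ | ⟨h', w⟩⟩
      · have := adj _ _ h
        simp at this
      · simp
  have d3 : G'.dist (⟨a, by omega⟩, ⟨b, by omega⟩) (⟨a, by omega⟩, ⟨b + 1, by omega⟩) = 3 := by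
    apply le_antisymm
    · exact SimpleGraph.dist_le (.cons e1 (.cons e2 (.cons e3 .nil)))
    · obtain ⟨w, hw⟩ := SimpleGraph.Reachable.exists_walk_length_eq_dist
        (⟨.cons e1 (.cons e2 (.cons e3 .nil))⟩ : G'.Reachable _ _)
      rw [← hw]
      rcases w with _ | ⟨h, _ | ⟨h', _ | ⟨h'', w⟩⟩⟩
      · exact absurd h ne
      · have h1 := adj _ _ h
        have h2 := adj _ _ h'
        simp only at h1 h2
        omega
      · simp
  exact ⟨d2, d3, by omega⟩
end
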